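/- The x_1-axis is a generalized Darboux direction of M at the origin if and only if C_{1στ} = 0 for all 2 ≤ σ, τ ≤ n. Precisely: for every β ∈ ℝ, the 3-jet at the origin of the contact function φ_β(x) = g_β(x, f(x)) depends only on (x_2,…,x_n) (i.e., every third-order Taylor coefficient of φ_β involving the variable x_1 vanishes) if and only if C_{1σσ} = (2(n+1)/(n+2)) K_{1σσ} − (2 ε_1 ε_σ/(n+2)) K_{111} − (2 ε_σ/(n+2)) Σ_{ρ≥2, ρ≠σ} ε_ρ K_{1ρρ} = 0 for all σ ∈ {2,…,n} and C_{1στ} = 2 K_{1στ} = 0 for all 2 ≤ σ ≠ τ ≤ n. -/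

import Mathlib

/-!
The contact function is `φ_β = Q + a · f` with `Q = ½ Σ ε_σ x_σ²` and
`a = -1 + L + β f`, where `L` is the linear form `(2/3) ε₁ K₁₁₁ x₁ + 2 ε₁ Σ_{σ ≥ 2} K₁₁σ x_σ`.
Since `f` and `df` vanish at the origin, the Leibniz rule (`thirdDeriv_mul`) gives
`∂³φ_β (u, v, w) = -∂³f (u, v, w) + L u ∂²f (v, w) + L v ∂²f (u, w) + L w ∂²f (u, v)`,
which does not involve `β`. The coefficients with indices `(1,1,1)` and `(1,1,σ)` vanish
identically, so the Darboux condition says `K₁στ = 0` for `σ ≠ τ` and `3 K₁σσ = ε₁ ε_σ K₁₁₁`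
for `σ, τ ≥ 2`.

With `k_σ = ε_σ K₁σσ`, `k₁ = ε₁ K₁₁₁` and `S = Σ_{σ ≥ 2} k_σ`, the equations `C₁σσ = 0` read
`(n + 2) k_σ = k₁ + S`. Summing over the `n - 1` indices `σ ≥ 2` gives `3 S = (n - 1) k₁`, hence
`3 k_σ = k₁`; the converse is immediate (`apolar_system_iff`).
-/

/-- The `i`-th standard basis vector of `ℝⁿ`. -/
noncomputable def stdBasis (n : ℕ) (i : Fin n) : Fin n → ℝ := Pi.single i 1

/-- The Moutard pencil hyperquadric polynomial in the `x₁`-direction: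
`g_β(x, y) = −y + (1/2)Σ ε_σ x_σ² + (2/3)ε₁K₁₁₁x₁y + 2ε₁Σ_{σ≥2}K₁₁σ x_σ y + βy²`. -/
noncomputable def moutardG (n : ℕ) [NeZero n] (ε : Fin n → ℝ)
    (K : Fin n → Fin n → Fin n → ℝ) (β : ℝ) (x : Fin n → ℝ) (y : ℝ) : ℝ :=
  -y + (1 / 2) * ∑ σ, ε σ * (x σ) ^ 2 + (2 / 3) * ε 0 * K 0 0 0 * x 0 * y
    + 2 * ε 0 * (∑ σ ∈ Finset.univ.erase (0 : Fin n), K 0 0 σ * x σ) * y + β * y ^ 2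

lemma secondDeriv_eq {E : Type*} [NormedAddCommGroup E] [NormedSpace ℝ E] {g : E → ℝ}
    (hg : ContDiff ℝ (⊤ : ℕ∞) g) (y v w : E) :
    iteratedFDeriv ℝ 2 g y ![v, w] = fderiv ℝ (fun z => fderiv ℝ g z w) y v := by
  have hd : DifferentiableAt ℝ (fderiv ℝ g) y :=
    ((hg.fderiv_right (m := 1) (by norm_cast)).differentiable (by norm_num)) y
  rw [iteratedFDeriv_two_apply, fderiv_clm_apply hd (differentiableAt_const w)]
  simp

/-- The third derivative as an iterated directional derivative. -/
lemma thirdDeriv_eq {E : Type*} [NormedAddCommGroup E] [NormedSpace ℝ E] {g : E → ℝ}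
    (hg : ContDiff ℝ (⊤ : ℕ∞) g) (x u v w : E) :
    iteratedFDeriv ℝ 3 g x ![u, v, w]
      = fderiv ℝ (fun y => fderiv ℝ (fun z => fderiv ℝ g z w) y v) x u := by
  have hd : DifferentiableAt ℝ (iteratedFDeriv ℝ 2 g) x :=
    (hg.differentiable_iteratedFDeriv (by norm_cast)) x
  simp_rw [← secondDeriv_eq hg]
  rw [iteratedFDeriv_succ_apply_left, fderiv_continuousMultilinear_apply_const_apply hd]
  rfl

lemma contDiff_dirDeriv {E : Type*} [NormedAddCommGroup E] [NormedSpace ℝ E] {g : E → ℝ}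
    (hg : ContDiff ℝ (⊤ : ℕ∞) g) (w : E) :
    ContDiff ℝ (⊤ : ℕ∞) (fun z => fderiv ℝ g z w) :=
  (hg.fderiv_right (m := (⊤ : ℕ∞)) (by norm_cast)).clm_apply contDiff_const

lemma dirDeriv_mul {E : Type*} [NormedAddCommGroup E] [NormedSpace ℝ E] {a g : E → ℝ}
    (ha : ContDiff ℝ (⊤ : ℕ∞) a) (hg : ContDiff ℝ (⊤ : ℕ∞) g) (x w : E) :
    fderiv ℝ (fun z => a z * g z) x w = a x * fderiv ℝ g x w + fderiv ℝ a x w * g x := by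
  rw [fderiv_fun_mul (ha.differentiable (by simp) x) (hg.differentiable (by simp) x)]
  simp [mul_comm]

lemma dirDeriv_add {E : Type*} [NormedAddCommGroup E] [NormedSpace ℝ E] {a g : E → ℝ}
    (ha : ContDiff ℝ (⊤ : ℕ∞) a) (hg : ContDiff ℝ (⊤ : ℕ∞) g) (x w : E) :
    fderiv ℝ (fun z => a z + g z) x w = fderiv ℝ a x w + fderiv ℝ g x w := by
  rw [fderiv_fun_add (ha.differentiable (by simp) x) (hg.differentiable (by simp) x)]
  simp

/-- Leibniz rule for the third derivative of `a * f` at a zero of both `f` and `df`. -/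
lemma thirdDeriv_mul {E : Type*} [NormedAddCommGroup E] [NormedSpace ℝ E] {a f : E → ℝ}
    (ha : ContDiff ℝ (⊤ : ℕ∞) a) (hf : ContDiff ℝ (⊤ : ℕ∞) f) (x : E)
    (hf0 : f x = 0) (hdf : fderiv ℝ f x = 0) (u v w : E) :
    iteratedFDeriv ℝ 3 (fun z => a z * f z) x ![u, v, w]
      = a x * iteratedFDeriv ℝ 3 f x ![u, v, w]
        + fderiv ℝ a x u * iteratedFDeriv ℝ 2 f x ![v, w]
        + fderiv ℝ a x v * iteratedFDeriv ℝ 2 f x ![u, w]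
        + fderiv ℝ a x w * iteratedFDeriv ℝ 2 f x ![u, v] := by
  have hfw := contDiff_dirDeriv hf w
  have hfv := contDiff_dirDeriv hf v
  have haw := contDiff_dirDeriv ha w
  have hav := contDiff_dirDeriv ha v
  have hfvw := contDiff_dirDeriv hfw v
  have havw := contDiff_dirDeriv haw v
  rw [thirdDeriv_eq (ha.mul hf), thirdDeriv_eq hf, secondDeriv_eq hf, secondDeriv_eq hf,
    secondDeriv_eq hf]
  simp_rw [dirDeriv_mul ha hf, dirDeriv_add (ha.mul hfw) (haw.mul hf), dirDeriv_mul ha hfw,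
    dirDeriv_mul haw hf]
  rw [dirDeriv_add ((ha.mul hfvw).add (hav.mul hfw)) ((haw.mul hfv).add (havw.mul hf)),
    dirDeriv_add (ha.mul hfvw) (hav.mul hfw), dirDeriv_add (haw.mul hfv) (havw.mul hf),
    dirDeriv_mul ha hfvw, dirDeriv_mul hav hfw, dirDeriv_mul haw hfv, dirDeriv_mul havw hf]
  simp only [hf0, hdf, _root_.zero_apply]
  ring

/-- A diagonal quadratic form has vanishing third derivative. -/
lemma thirdDeriv_quadratic {n : ℕ} (ε : Fin n → ℝ) (x u v w : Fin n → ℝ) :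
    iteratedFDeriv ℝ 3 (fun z : Fin n → ℝ => (1 / 2) * ∑ σ, ε σ * z σ ^ 2) x ![u, v, w] = 0 := by
  have hQ : ContDiff ℝ (⊤ : ℕ∞) (fun z : Fin n → ℝ => (1 / 2) * ∑ σ, ε σ * z σ ^ 2) := by
    fun_prop
  rw [thirdDeriv_eq hQ]
  have h1 : ∀ z : Fin n → ℝ, fderiv ℝ (fun z : Fin n → ℝ => (1 / 2) * ∑ σ, ε σ * z σ ^ 2) z w
      = ∑ σ, (ε σ * w σ) * z σ := by
    intro z
    have h : HasFDerivAt (fun z : Fin n → ℝ => (1 / 2) * ∑ σ, ε σ * z σ ^ 2) _ z :=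
      (HasFDerivAt.fun_sum fun σ (_ : σ ∈ Finset.univ) =>
        ((hasFDerivAt_apply (𝕜 := ℝ) σ z).pow 2).const_mul (ε σ)).const_mul (1 / 2)
    rw [h.fderiv]
    simp [Finset.mul_sum]
    exact Finset.sum_congr rfl fun σ _ => by ring
  have h2 : ∀ z : Fin n → ℝ, fderiv ℝ (fun z : Fin n → ℝ => ∑ σ, (ε σ * w σ) * z σ) z v
      = ∑ σ, (ε σ * w σ) * v σ := by
    intro z
    have h : HasFDerivAt (fun z : Fin n → ℝ => ∑ σ, (ε σ * w σ) * z σ) _ z :=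
      HasFDerivAt.fun_sum fun σ (_ : σ ∈ Finset.univ) =>
        (hasFDerivAt_apply (𝕜 := ℝ) σ z).const_mul (ε σ * w σ)
    rw [h.fderiv]
    simp
  simp_rw [h1, h2]
  simp

/-- The coefficients of the linear form `L` in the Moutard pencil. -/
noncomputable def moutardL (n : ℕ) [NeZero n] (ε : Fin n → ℝ)
    (K : Fin n → Fin n → Fin n → ℝ) (i : Fin n) : ℝ :=
  if i = 0 then (2 / 3) * ε 0 * K 0 0 0 else 2 * ε 0 * K 0 0 i

lemma moutardG_eq (n : ℕ) [NeZero n] (ε : Fin n → ℝ)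
    (K : Fin n → Fin n → Fin n → ℝ) (β : ℝ) (x : Fin n → ℝ) (y : ℝ) :
    moutardG n ε K β x y = (1 / 2) * ∑ σ, ε σ * x σ ^ 2
      + (-1 + ∑ σ, moutardL n ε K σ * x σ + β * y) * y := by
  have h : ∑ σ, moutardL n ε K σ * x σ = (2 / 3) * ε 0 * K 0 0 0 * x 0
      + 2 * ε 0 * ∑ σ ∈ Finset.univ.erase (0 : Fin n), K 0 0 σ * x σ := by
    rw [← Finset.add_sum_erase _ _ (Finset.mem_univ (0 : Fin n)), Finset.mul_sum]
    have h0 : moutardL n ε K 0 = (2 / 3) * ε 0 * K 0 0 0 := by simp [moutardL]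
    rw [h0]
    refine congrArg _ (Finset.sum_congr rfl fun σ hσ => ?_)
    rw [moutardL, if_neg (Finset.ne_of_mem_erase hσ)]
    ring
  rw [h, moutardG]
  ring

/-- The third-order coefficients of the contact function, for any `f` whose 1-jet vanishes. -/
lemma thirdDeriv_contact (n : ℕ) [NeZero n] (ε : Fin n → ℝ)
    (K : Fin n → Fin n → Fin n → ℝ) (β : ℝ) (f : (Fin n → ℝ) → ℝ)
    (hf : ContDiff ℝ (⊤ : ℕ∞) f) (hf0 : f 0 = 0) (hdf : fderiv ℝ f 0 = 0) (i j k : Fin n) :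
    iteratedFDeriv ℝ 3 (fun x => moutardG n ε K β x (f x)) 0
        ![stdBasis n i, stdBasis n j, stdBasis n k]
      = -iteratedFDeriv ℝ 3 f 0 ![stdBasis n i, stdBasis n j, stdBasis n k]
        + moutardL n ε K i * iteratedFDeriv ℝ 2 f 0 ![stdBasis n j, stdBasis n k]
        + moutardL n ε K j * iteratedFDeriv ℝ 2 f 0 ![stdBasis n i, stdBasis n k]
        + moutardL n ε K k * iteratedFDeriv ℝ 2 f 0 ![stdBasis n i, stdBasis n j] := by
  have hQ : ContDiff ℝ (⊤ : ℕ∞) (fun z : Fin n → ℝ => (1 / 2) * ∑ σ, ε σ * z σ ^ 2) := by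
    fun_prop
  have ha : ContDiff ℝ (⊤ : ℕ∞)
      (fun z : Fin n → ℝ => -1 + ∑ σ, moutardL n ε K σ * z σ + β * f z) := by
    fun_prop
  have hda : ∀ i, fderiv ℝ (fun z : Fin n → ℝ => -1 + ∑ σ, moutardL n ε K σ * z σ + β * f z) 0
      (stdBasis n i) = moutardL n ε K i := by
    intro i
    have hfd : HasFDerivAt f (0 : (Fin n → ℝ) →L[ℝ] ℝ) 0 := by
      rw [← hdf]
      exact (hf.differentiable (by simp) 0).hasFDerivAt
    have h : HasFDerivAt
        (fun z : Fin n → ℝ => -1 + ∑ σ, moutardL n ε K σ * z σ + β * f z) _ 0 :=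
      ((HasFDerivAt.fun_sum fun σ (_ : σ ∈ Finset.univ) =>
        (hasFDerivAt_apply (𝕜 := ℝ) σ (0 : Fin n → ℝ)).const_mul
          (moutardL n ε K σ)).const_add (-1)).add (hfd.const_mul β)
    rw [h.fderiv]
    simp [stdBasis, Pi.single_apply]
  have hadd : iteratedFDeriv ℝ 3 (fun x => moutardG n ε K β x (f x)) 0
      = iteratedFDeriv ℝ 3 (fun z : Fin n → ℝ => (1 / 2) * ∑ σ, ε σ * z σ ^ 2) 0
        + iteratedFDeriv ℝ 3 (fun z : Fin n → ℝ =>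
          (-1 + ∑ σ, moutardL n ε K σ * z σ + β * f z) * f z) 0 := by
    simp_rw [moutardG_eq]
    exact iteratedFDeriv_add_apply (hQ.of_le (by norm_cast)).contDiffAt
      ((ha.mul hf).of_le (by norm_cast)).contDiffAt
  rw [hadd, _root_.add_apply, thirdDeriv_quadratic,
    thirdDeriv_mul ha hf 0 hf0 hdf, hda, hda, hda]
  simp [hf0]

/-- The linear algebra behind the diagonal equations: on a set of `m` indices,
`(m + 3) k_σ = c + Σ k` for all `σ` is equivalent to `3 k_σ = c` for all `σ`. -/
lemma apolar_system_iff {ι : Type*} (s : Finset ι) (k : ι → ℝ) (c : ℝ) :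
    (∀ σ ∈ s, ((s.card : ℝ) + 3) * k σ = c + ∑ ρ ∈ s, k ρ) ↔ ∀ σ ∈ s, 3 * k σ = c := by
  constructor
  · intro h σ hσ
    have hsum := Finset.sum_congr rfl h
    rw [← Finset.mul_sum, Finset.sum_const, nsmul_eq_mul] at hsum
    have hpos : (0 : ℝ) < (s.card : ℝ) + 3 := by positivity
    have hS : 3 * ∑ ρ ∈ s, k ρ = s.card * c := by linarith
    refine mul_left_cancel₀ hpos.ne' ?_
    linarith [h σ hσ]
  · intro h σ hσ
    have hS : 3 * ∑ ρ ∈ s, k ρ = s.card * c := by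
      rw [Finset.mul_sum, Finset.sum_congr rfl h, Finset.sum_const, nsmul_eq_mul]
    have := h σ hσ
    have hk : k σ = c / 3 := by linarith
    have hS' : ∑ ρ ∈ s, k ρ = s.card * c / 3 := by linarith
    rw [hk, hS']
    ring

/-- the `x₁`-axis is a generalized Darboux direction of `M` at the origin
(i.e., for every `β`, every third-order Taylor coefficient of the contact function
`φ_β(x) = g_β(x, f(x))` involving the variable `x₁` vanishes, so the 3-jet of `φ_β`
depends only on `(x₂,…,x_n)`) if and only if `C₁στ = 0` for all `2 ≤ σ, τ ≤ n`. -/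
theorem statement11 (n : ℕ) [NeZero n] (hn : 2 ≤ n)
    (ε : Fin n → ℝ) (hε : ∀ i, ε i = 1 ∨ ε i = -1)
    (K : Fin n → Fin n → Fin n → ℝ)
    (hKsym₁ : ∀ i j k, K i j k = K j i k)
    (hKsym₂ : ∀ i j k, K i j k = K i k j)
    (H : Fin n → Fin n → Fin n → Fin n → ℝ)
    (hHsym₁ : ∀ i j k l, H i j k l = H j i k l)
    (hHsym₂ : ∀ i j k l, H i j k l = H i k j l)
    (hHsym₃ : ∀ i j k l, H i j k l = H i j l k)
    (f : (Fin n → ℝ) → ℝ)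
    (hf : ContDiff ℝ (⊤ : ℕ∞) f) (hf0 : f 0 = 0) (hdf : fderiv ℝ f 0 = 0)
    (hf2 : ∀ i j, iteratedFDeriv ℝ 2 f 0 ![stdBasis n i, stdBasis n j]
      = if i = j then ε i else 0)
    (hf3 : ∀ i j k, iteratedFDeriv ℝ 3 f 0 ![stdBasis n i, stdBasis n j, stdBasis n k]
      = 2 * K i j k)
    (hf4 : ∀ i j k l,
      iteratedFDeriv ℝ 4 f 0 ![stdBasis n i, stdBasis n j, stdBasis n k, stdBasis n l]
      = 2 * H i j k l)
    :
    (∀ β : ℝ, ∀ a b : Fin n,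
      iteratedFDeriv ℝ 3 (fun x => moutardG n ε K β x (f x)) 0
        ![stdBasis n 0, stdBasis n a, stdBasis n b] = 0) ↔
    ((∀ σ : Fin n, σ ≠ 0 →
        (2 * ((n : ℝ) + 1) / ((n : ℝ) + 2)) * K 0 σ σ
          - (2 * ε 0 * ε σ / ((n : ℝ) + 2)) * K 0 0 0
          - (2 * ε σ / ((n : ℝ) + 2)) *
              ∑ ρ ∈ (Finset.univ.erase (0 : Fin n)).erase σ, ε ρ * K 0 ρ ρ = 0) ∧
     (∀ σ τ : Fin n, σ ≠ 0 → τ ≠ 0 → σ ≠ τ → 2 * K 0 σ τ = 0)) := by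
  have hsq : ∀ i, ε i * ε i = 1 := fun i => by rcases hε i with h | h <;> rw [h] <;> norm_num
  have hcoef : ∀ (β : ℝ) (a b : Fin n),
      iteratedFDeriv ℝ 3 (fun x => moutardG n ε K β x (f x)) 0
        ![stdBasis n 0, stdBasis n a, stdBasis n b]
      = -(2 * K 0 a b) + moutardL n ε K 0 * (if a = b then ε a else 0)
        + moutardL n ε K a * (if 0 = b then ε 0 else 0)
        + moutardL n ε K b * (if 0 = a then ε 0 else 0) := by
    intro β a b
    rw [thirdDeriv_contact n ε K β f hf hf0 hdf, hf3, hf2, hf2, hf2]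
  simp_rw [hcoef]
  have hcard : ((Finset.univ.erase (0 : Fin n)).card : ℝ) + 3 = (n : ℝ) + 2 := by
    rw [Finset.card_erase_of_mem (Finset.mem_univ _), Finset.card_univ, Fintype.card_fin,
      Nat.cast_sub (by omega)]
    push_cast
    ring
  -- In terms of `k_σ = ε_σ K₁σσ`, the diagonal equations form the system of `apolar_system_iff`.
  have hdiag : (∀ σ : Fin n, σ ≠ 0 →
        (2 * ((n : ℝ) + 1) / ((n : ℝ) + 2)) * K 0 σ σ
          - (2 * ε 0 * ε σ / ((n : ℝ) + 2)) * K 0 0 0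
          - (2 * ε σ / ((n : ℝ) + 2)) *
              ∑ ρ ∈ (Finset.univ.erase (0 : Fin n)).erase σ, ε ρ * K 0 ρ ρ = 0) ↔
      ∀ σ : Fin n, σ ≠ 0 → 3 * (ε σ * K 0 σ σ) = ε 0 * K 0 0 0 := by
    have key := apolar_system_iff (Finset.univ.erase (0 : Fin n)) (fun σ => ε σ * K 0 σ σ)
      (ε 0 * K 0 0 0)
    simp only [Finset.mem_erase, Finset.mem_univ, and_true, hcard] at key
    rw [← key]
    refine forall₂_congr fun σ hσ => ?_
    have hS := Finset.add_sum_erase (Finset.univ.erase (0 : Fin n)) (fun ρ => ε ρ * K 0 ρ ρ)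
      (Finset.mem_erase.2 ⟨hσ, Finset.mem_univ σ⟩)
    rw [← hS]
    set T := ∑ ρ ∈ (Finset.univ.erase (0 : Fin n)).erase σ, ε ρ * K 0 ρ ρ
    have hrew : (2 * ((n : ℝ) + 1) / ((n : ℝ) + 2)) * K 0 σ σ
          - (2 * ε 0 * ε σ / ((n : ℝ) + 2)) * K 0 0 0 - (2 * ε σ / ((n : ℝ) + 2)) * T
        = 2 / ((n : ℝ) + 2) * (((n : ℝ) + 1) * K 0 σ σ - ε σ * (ε 0 * K 0 0 0 + T)) := by
      ring
    rw [hrew, mul_eq_zero, or_iff_right (by positivity)]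
    constructor
    · intro h
      linear_combination ε σ * h + (ε 0 * K 0 0 0 + T) * hsq σ
    · intro h
      linear_combination ε σ * h - ((n : ℝ) + 1) * K 0 σ σ * hsq σ
  rw [hdiag]
  constructor
  · intro h
    refine ⟨fun σ hσ => ?_, fun σ τ hσ hτ hστ => ?_⟩
    · have := h 0 σ σ
      simp only [moutardL, if_true, if_neg hσ, if_neg hσ.symm] at this
      linear_combination (-3 / 2 * ε σ) * this + ε 0 * K 0 0 0 * hsq σ
    · have := h 0 σ τ
      simp only [if_neg hστ, if_neg hσ.symm, if_neg hτ.symm] at this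
      linarith
  · rintro ⟨h1, h2⟩ - a b
    by_cases ha : a = 0
    · subst ha
      by_cases hb : b = 0
      · subst hb
        simp only [moutardL, if_true]
        linear_combination 2 * K 0 0 0 * hsq 0
      · simp only [moutardL, if_true, if_neg hb, if_neg (Ne.symm hb)]
        linear_combination 2 * K 0 0 b * hsq 0
    · by_cases hb : b = 0
      · subst hb
        simp only [moutardL, if_true, if_neg ha, if_neg (Ne.symm ha)]
        linear_combination 2 * K 0 0 a * hsq 0 - 2 * hKsym₂ 0 a 0
      · by_cases hab : a = b
        · subst hab
          simp only [moutardL, if_true, if_neg ha, if_neg (Ne.symm ha)]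
          linear_combination (-2 / 3 * ε a) * h1 a ha + 2 * K 0 a a * hsq a
        · simp only [if_neg hab, if_neg (Ne.symm ha), if_neg (Ne.symm hb)]
          linarith [h2 a b ha hb hab]
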